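/- The first integral simplicial homology group of the 11-vertex flag triangulation of ℝP² (the complex Δ(G) of Figure 5) is isomorphic to ℤ/2ℤ. -/

import Mathlib

/-!
Fix a Möbius band in the triangulation; the triangles outside it form a disc containing every
vertex. Let `q` be a 1-cocycle with values in an abelian group `A`. Subtracting a coboundary makes
`q` vanish on a spanning tree of the disc, hence on the whole disc, and going once around the band
then shows that `q` takes a single value `g` on the edges crossing its core, with `g = -g`. So
modulo coboundaries every cocycle is the image of one universal cocycle with values in `ℤ/2ℤ`, which
counts crossings with the core. For the tautological cocycle, whose values are the classes of edges
modulo boundaries, this says that a cycle with an even number of crossings is a boundary;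
conversely boundaries have an even number of crossings, and some loop crosses the core exactly once.
-/

namespace SC

variable (R : Type) [CommRing R] {V : Type} [Fintype V] [LinearOrder V]

/-- The simplicial boundary operator on the free module on all subsets of `V`
(the empty set playing the role of the `(-1)`-simplex, so this is the augmented
simplicial chain complex; faces are ordered by the linear order on `V`). -/
noncomputable def bd : (Finset V → R) →ₗ[R] (Finset V → R) :=
  ∑ σ : Finset V, (LinearMap.proj σ).smulRight
    (∑ x ∈ σ, ((-1 : R) ^ ((σ.filter fun y => y < x).card)) • (Pi.single (σ.erase x) (1 : R) : Finset V → R))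

/-- The `d`-dimensional faces of `Δ` (faces with `d+1` vertices). -/
def Faces (Δ : Finset (Finset V)) (d : ℕ) : Finset (Finset V) :=
  Δ.filter fun s => s.card = d + 1

/-- `Δ` is an (abstract) simplicial complex: it is downward closed. -/
def IsComplex (Δ : Finset (Finset V)) : Prop := ∀ s ∈ Δ, ∀ t ⊆ s, t ∈ Δ

/-- The module of simplicial `d`-chains of `Δ`: the span of the `d`-faces. -/
noncomputable def faceSpan (Δ : Finset (Finset V)) (d : ℕ) : Submodule R (Finset V → R) :=
  Submodule.span R ((fun s => (Pi.single s (1 : R) : Finset V → R)) '' (Faces Δ d : Set (Finset V)))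

/-- Reduced `d`-cycles of `Δ`. -/
noncomputable def cycles (Δ : Finset (Finset V)) (d : ℕ) : Submodule R (Finset V → R) :=
  faceSpan R Δ d ⊓ LinearMap.ker (bd R)

/-- `d`-boundaries of `Δ`. -/
noncomputable def boundaries (Δ : Finset (Finset V)) (d : ℕ) : Submodule R (Finset V → R) :=
  Submodule.map (bd R) (faceSpan R Δ (d + 1))

/-- Reduced simplicial homology of `Δ` in degree `d`, with coefficients in `R`. -/
noncomputable def Homology (Δ : Finset (Finset V)) (d : ℕ) : Type :=
  ↥(cycles R Δ d) ⧸ ((boundaries R Δ d ⊓ cycles R Δ d).comap (cycles R Δ d).subtype)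

noncomputable instance (Δ : Finset (Finset V)) (d : ℕ) : AddCommGroup (Homology R Δ d) :=
  inferInstanceAs (AddCommGroup
    (↥(cycles R Δ d) ⧸ ((boundaries R Δ d ⊓ cycles R Δ d).comap (cycles R Δ d).subtype)))

noncomputable instance (Δ : Finset (Finset V)) (d : ℕ) : Module R (Homology R Δ d) :=
  inferInstanceAs (Module R
    (↥(cycles R Δ d) ⧸ ((boundaries R Δ d ⊓ cycles R Δ d).comap (cycles R Δ d).subtype)))

/-- The induced subcomplex of `Δ` on a vertex subset `α`. -/
def restrict (Δ : Finset (Finset V)) (α : Finset V) : Finset (Finset V) :=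
  Δ.filter fun s => s ⊆ α

/-- Graded Betti numbers of the Stanley–Reisner ring of `Δ` over `k`,
defined via Hochster's formula. -/
noncomputable def betti (k : Type) [CommRing k] (Δ : Finset (Finset V)) (i j : ℕ) : ℕ :=
  ∑ α ∈ (Finset.univ : Finset V).powersetCard j,
    Module.finrank k (Homology k (restrict Δ α) (j - i - 1))

/-- The 11-vertex minimal flag triangulation of the real projective plane of Figure 5
of the paper (vertices `v_1, …, v_11` renamed `0, …, 10`): the simplicial complex
with 11 vertices, 30 edges and 20 triangles. -/
def rpTwoComplex : Finset (Finset (Fin 11)) :=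
  {∅,
   {0},
   {1},
   {2},
   {3},
   {4},
   {5},
   {6},
   {7},
   {8},
   {9},
   {10},
   {0, 1},
   {0, 7},
   {1, 2},
   {1, 8},
   {2, 8},
   {2, 9},
   {8, 9},
   {0, 8},
   {9, 10},
   {8, 10},
   {7, 8},
   {7, 10},
   {1, 5},
   {0, 5},
   {4, 9},
   {4, 10},
   {0, 4},
   {4, 5},
   {5, 10},
   {3, 4},
   {0, 3},
   {3, 7},
   {5, 6},
   {6, 10},
   {6, 7},
   {3, 6},
   {3, 9},
   {1, 6},
   {2, 3},
   {2, 6},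
   {1, 2, 8},
   {2, 8, 9},
   {0, 1, 8},
   {8, 9, 10},
   {0, 7, 8},
   {7, 8, 10},
   {0, 1, 5},
   {4, 9, 10},
   {0, 4, 5},
   {4, 5, 10},
   {0, 3, 4},
   {0, 3, 7},
   {5, 6, 10},
   {6, 7, 10},
   {3, 6, 7},
   {3, 4, 9},
   {1, 5, 6},
   {2, 3, 9},
   {1, 2, 6},
   {2, 3, 6}}

theorem bd_single (s : Finset V) :
    bd R (Pi.single s 1) = ∑ x ∈ s, ((-1 : R) ^ ((s.filter fun y => y < x).card)) •
      (Pi.single (s.erase x) (1 : R) : Finset V → R) := by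
  rw [bd, LinearMap.sum_apply, Finset.sum_eq_single s]
  · simp
  · intro t _ ht
    simp [ht]
  · simp

theorem bd_single_pair {a b : V} (h : a < b) :
    bd R (Pi.single {a, b} 1) = Pi.single {b} 1 - Pi.single {a} 1 := by
  have hb : ({a, b} : Finset V).erase b = {a} := by grind
  have ha : ({a, b} : Finset V).erase a = {b} := by grind
  rw [bd_single, Finset.sum_pair h.ne, ha, hb]
  simp [Finset.filter_insert, Finset.filter_singleton, h, h.not_gt, sub_eq_add_neg]

theorem bd_single_triple {a b c : V} (hab : a < b) (hbc : b < c) :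
    bd R (Pi.single {a, b, c} 1) =
      Pi.single {b, c} 1 - Pi.single {a, c} 1 + Pi.single {a, b} 1 := by
  have hac := hab.trans hbc
  have hc : ({a, b, c} : Finset V).erase c = {a, b} := by grind
  have hb : ({a, b, c} : Finset V).erase b = {a, c} := by grind
  have ha : ({a, b, c} : Finset V).erase a = {b, c} := by grind
  rw [bd_single, Finset.sum_insert (by grind), Finset.sum_pair hbc.ne, ha, hb, hc]
  simp [Finset.filter_insert, Finset.filter_singleton, hab, hbc, hac, hab.not_gt, hbc.not_gt,
    hac.not_gt, hab.ne, sub_eq_add_neg, add_assoc]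

section Faces

variable {V : Type} [LinearOrder V] {Δ : Finset (Finset V)}

theorem mem_faces_one_iff {s : Finset V} :
    s ∈ Faces Δ 1 ↔ ∃ a b, a < b ∧ {a, b} ∈ Δ ∧ s = {a, b} := by
  rw [Faces, Finset.mem_filter]
  constructor
  · rintro ⟨hs, hcard⟩
    obtain ⟨a, b, hab, rfl⟩ := Finset.card_eq_two.1 hcard
    rcases hab.lt_or_gt with hlt | hgt
    · exact ⟨a, b, hlt, hs, rfl⟩
    · exact ⟨b, a, hgt, Finset.pair_comm a b ▸ hs, Finset.pair_comm a b⟩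
  · rintro ⟨a, b, hab, hs, rfl⟩
    exact ⟨hs, Finset.card_pair hab.ne⟩

theorem mem_faces_two_iff {s : Finset V} :
    s ∈ Faces Δ 2 ↔ ∃ a b c, a < b ∧ b < c ∧ {a, b, c} ∈ Δ ∧ s = {a, b, c} := by
  rw [Faces, Finset.mem_filter]
  constructor
  · rintro ⟨hs, hcard⟩
    let e : Fin 3 ↪o V := s.orderEmbOfFin hcard
    have hse : s = {e 0, e 1, e 2} := by
      have huniv : (Finset.univ : Finset (Fin 3)) = {0, 1, 2} := rfl
      rw [← s.image_orderEmbOfFin_univ hcard, huniv, Finset.image_insert, Finset.image_insert,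
        Finset.image_singleton]
    exact ⟨e 0, e 1, e 2, e.strictMono (by decide), e.strictMono (by decide), hse ▸ hs, hse⟩
  · rintro ⟨a, b, c, hab, hbc, hs, rfl⟩
    exact ⟨hs, Finset.card_eq_three.2 ⟨a, b, c, hab.ne, (hab.trans hbc).ne, hbc.ne, rfl⟩⟩

theorem single_mem_faceSpan {d : ℕ} {s : Finset V} (hs : s ∈ Faces Δ d) :
    Pi.single s 1 ∈ faceSpan R Δ d :=
  Submodule.subset_span (Set.mem_image_of_mem _ hs)

end Faces

/-- A 1-cocycle on `Δ` with values in `A`, encoded as a function of an ordered pair of vertices: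
only the values `q a b` at edges with `a < b` are meaningful. -/
def IsOneCocycle {V A : Type*} [LinearOrder V] [AddCommGroup A] (Δ : Finset (Finset V))
    (q : V → V → A) : Prop :=
  ∀ ⦃a b c : V⦄, a < b → b < c → {a, b, c} ∈ Δ → q a c = q a b + q b c

theorem IsOneCocycle.sub_coboundary {V A : Type*} [LinearOrder V] [AddCommGroup A]
    {Δ : Finset (Finset V)} {q : V → V → A} (hq : IsOneCocycle Δ q) (f : V → A) :
    IsOneCocycle Δ fun a b => q a b - (f b - f a) := by
  intro a b c hab hbc h
  simp only [hq hab hbc h]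
  abel

section Chains

variable {R} {Δ : Finset (Finset V)} {A : Type*} [AddCommGroup A] [Module R A]

theorem boundaries_le_iff {d : ℕ} {N : Submodule R (Finset V → R)} :
    boundaries R Δ d ≤ N ↔ ∀ s ∈ Faces Δ (d + 1), bd R (Pi.single s 1) ∈ N := by
  rw [boundaries, faceSpan, Submodule.map_span_le, Set.forall_mem_image]
  rfl

theorem boundaries_one_le_ker_iff {φ : (Finset V → R) →ₗ[R] A} :
    boundaries R Δ 1 ≤ LinearMap.ker φ ↔
      IsOneCocycle Δ fun a b => φ (Pi.single {a, b} 1) := by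
  have relation {a b c : V} (hab : a < b) (hbc : b < c) :
      bd R (Pi.single {a, b, c} 1) ∈ LinearMap.ker φ ↔
        φ (Pi.single {a, c} 1) = φ (Pi.single {a, b} 1) + φ (Pi.single {b, c} 1) := by
    rw [LinearMap.mem_ker, bd_single_triple R hab hbc, map_add, map_sub, sub_add_eq_add_sub,
      sub_eq_zero, add_comm, eq_comm]
  rw [boundaries_le_iff]
  constructor
  · intro h a b c hab hbc habc
    exact (relation hab hbc).1 (h _ (mem_faces_two_iff.2 ⟨a, b, c, hab, hbc, habc, rfl⟩))
  · intro h s hs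
    obtain ⟨a, b, c, hab, hbc, habc, rfl⟩ := mem_faces_two_iff.1 hs
    exact (relation hab hbc).2 (h hab hbc habc)

theorem map_eq_zero_of_mem_cycles_one {φ : (Finset V → R) →ₗ[R] A} (f : V → A)
    (h : ∀ ⦃a b⦄, a < b → {a, b} ∈ Δ → φ (Pi.single {a, b} 1) = f b - f a)
    {c : Finset V → R} (hc : c ∈ cycles R Δ 1) : φ c = 0 := by
  let F : (Finset V → R) →ₗ[R] A := ∑ v, (LinearMap.proj {v}).smulRight (f v)
  have hF (v : V) : F (Pi.single {v} 1) = f v := by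
    simp [F, LinearMap.sum_apply, Pi.single_apply]
  have hφF : Set.EqOn φ (F ∘ₗ bd R) (faceSpan R Δ 1) := by
    refine LinearMap.eqOn_span' ?_
    rintro _ ⟨s, hs, rfl⟩
    obtain ⟨a, b, hab, habΔ, rfl⟩ := mem_faces_one_iff.1 hs
    simp only [LinearMap.comp_apply, bd_single_pair R hab, map_sub, hF, h hab habΔ]
  rw [hφF hc.1, LinearMap.comp_apply, LinearMap.mem_ker.1 hc.2, map_zero]

/-- A linear map that takes cycles onto `A` and vanishes exactly on those that are boundaries
identifies homology with `A`. -/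
noncomputable def homologyEquivOfLinearMap {d : ℕ} (φ : (Finset V → R) →ₗ[R] A)
    (hsurj : ∀ m, ∃ c ∈ cycles R Δ d, φ c = m)
    (hker : ∀ c ∈ cycles R Δ d, φ c = 0 ↔ c ∈ boundaries R Δ d) : Homology R Δ d ≃ₗ[R] A :=
  (Submodule.quotEquivOfEq _ (LinearMap.ker (φ ∘ₗ (cycles R Δ d).subtype)) (by
      ext c
      simpa using (hker c c.2).symm)).trans
    (LinearMap.quotKerEquivOfSurjective _ fun m => by
      obtain ⟨c, hc, hm⟩ := hsurj m
      exact ⟨⟨c, hc⟩, hm⟩)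

end Chains

/-- The edges of a spanning tree of the 1-skeleton of `rpTwoComplex`, as increasing pairs: the star
of the vertex `8`, with one more edge to each of the vertices `3`, `4`, `5` and `6`. -/
def spanningTree : Finset (Fin 11 × Fin 11) :=
  {(0, 8), (1, 8), (2, 8), (7, 8), (8, 9), (8, 10), (3, 9), (4, 9), (0, 5), (1, 6)}

/-- The edges of `rpTwoComplex` crossed by the core of the Möbius band formed by the triangles
`034`, `037`, `367`, `6 7 10`, `5 6 10`, `4 5 10`, `045`, in this cyclic order. -/
def coreEdges : Finset (Finset (Fin 11)) :=
  {{0, 3}, {3, 7}, {6, 7}, {6, 10}, {5, 10}, {4, 5}, {0, 4}}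

/-- The universal 1-cocycle of `rpTwoComplex`: the number modulo `2` of edges of a chain, counted
with multiplicity, that cross the core of the Möbius band. -/
noncomputable def crossingParity : (Finset (Fin 11) → ℤ) →ₗ[ℤ] ZMod 2 :=
  ∑ s ∈ coreEdges, (Int.castAddHom (ZMod 2)).toIntLinearMap ∘ₗ LinearMap.proj s

/-- A loop crossing the core of the Möbius band once. -/
def oneSidedLoop : Finset (Fin 11) → ℤ :=
  Pi.single {0, 3} 1 + Pi.single {3, 9} 1 - Pi.single {8, 9} 1 - Pi.single {0, 8} 1

section ProjectivePlane

variable {A : Type*} [AddCommGroup A]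

theorem exists_eq_sub_on_spanningTree (q : Fin 11 → Fin 11 → A) :
    ∃ f : Fin 11 → A, ∀ e ∈ spanningTree, q e.1 e.2 = f e.2 - f e.1 := by
  refine ⟨![-q 0 8, -q 1 8, -q 2 8, q 8 9 - q 3 9, q 8 9 - q 4 9, q 0 5 - q 0 8, q 1 6 - q 1 8,
    -q 7 8, 0, q 8 9, q 8 10], ?_⟩
  simp [spanningTree]

variable {q : Fin 11 → Fin 11 → A}

theorem IsOneCocycle.triangle (hq : IsOneCocycle rpTwoComplex q) (a b c : Fin 11)
    (hab : a < b := by decide) (hbc : b < c := by decide)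
    (h : {a, b, c} ∈ rpTwoComplex := by
      simp only [rpTwoComplex, Finset.mem_insert, Finset.mem_singleton, true_or, or_true]) :
    q a c = q a b + q b c :=
  hq hab hbc h

theorem IsOneCocycle.eq_zero_of_notMem_coreEdges (hq : IsOneCocycle rpTwoComplex q)
    (htree : ∀ e ∈ spanningTree, q e.1 e.2 = 0) :
    ∀ ⦃a b⦄, a < b → {a, b} ∈ rpTwoComplex → {a, b} ∉ coreEdges → q a b = 0 := by
  simp only [spanningTree, Finset.forall_mem_insert, Finset.mem_singleton, forall_eq] at htree
  obtain ⟨h08, h18, h28, h78, h89, h8_10, h39, h49, h05, h16⟩ := htree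
  have h01 : q 0 1 = 0 := by simpa [h08, h18] using (hq.triangle 0 1 8).symm
  have h07 : q 0 7 = 0 := by simpa [h08, h78] using (hq.triangle 0 7 8).symm
  have h12 : q 1 2 = 0 := by simpa [h18, h28] using (hq.triangle 1 2 8).symm
  have h29 : q 2 9 = 0 := by simpa [h28, h89] using hq.triangle 2 8 9
  have h7_10 : q 7 10 = 0 := by simpa [h78, h8_10] using hq.triangle 7 8 10
  have h9_10 : q 9 10 = 0 := by simpa [h8_10, h89] using (hq.triangle 8 9 10).symm
  have h15 : q 1 5 = 0 := by simpa [h05, h01] using (hq.triangle 0 1 5).symm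
  have h56 : q 5 6 = 0 := by simpa [h16, h15] using (hq.triangle 1 5 6).symm
  have h26 : q 2 6 = 0 := by simpa [h16, h12] using (hq.triangle 1 2 6).symm
  have h23 : q 2 3 = 0 := by simpa [h29, h39] using (hq.triangle 2 3 9).symm
  have h36 : q 3 6 = 0 := by simpa [h26, h23] using (hq.triangle 2 3 6).symm
  have h34 : q 3 4 = 0 := by simpa [h39, h49] using (hq.triangle 3 4 9).symm
  have h4_10 : q 4 10 = 0 := by simpa [h49, h9_10] using hq.triangle 4 9 10
  have edges : ∀ s ∈ rpTwoComplex, ∀ a b : Fin 11, a < b → s = {a, b} → s ∉ coreEdges →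
      (a, b) ∈ spanningTree ∪ {(0, 1), (0, 7), (1, 2), (2, 9), (7, 10), (9, 10), (1, 5), (5, 6),
        (2, 6), (2, 3), (3, 6), (3, 4), (4, 10)} := by
    simp only [rpTwoComplex, Finset.forall_mem_insert, Finset.mem_singleton, forall_eq]
    and_intros <;> decide +kernel
  intro a b hab h hcore
  have hmem := edges _ h a b hab rfl hcore
  fin_cases hmem <;> assumption

theorem IsOneCocycle.eq_on_coreEdges (hq : IsOneCocycle rpTwoComplex q)
    (htree : ∀ e ∈ spanningTree, q e.1 e.2 = 0) :
    2 • q 0 3 = 0 ∧ ∀ ⦃a b⦄, a < b → {a, b} ∈ coreEdges → q a b = q 0 3 := by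
  have zero (a b : Fin 11) (hab : a < b := by decide)
      (h : {a, b} ∈ rpTwoComplex := by
        simp only [rpTwoComplex, Finset.mem_insert, true_or, or_true])
      (hcore : {a, b} ∉ coreEdges := by decide) : q a b = 0 :=
    hq.eq_zero_of_notMem_coreEdges htree hab h hcore
  have h04 : q 0 4 = q 0 3 := by simpa [zero 3 4] using hq.triangle 0 3 4
  have h37 : q 3 7 = -q 0 3 := by
    rw [eq_neg_iff_add_eq_zero, add_comm, ← hq.triangle 0 3 7, zero 0 7]
  have h67 : q 6 7 = -q 0 3 := by simpa [zero 3 6, h37] using (hq.triangle 3 6 7).symm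
  have h6_10 : q 6 10 = -q 0 3 := by simpa [h67, zero 7 10] using hq.triangle 6 7 10
  have h5_10 : q 5 10 = -q 0 3 := by simpa [zero 5 6, h6_10] using hq.triangle 5 6 10
  have h45 : q 4 5 = -q 0 3 := by
    rw [eq_neg_iff_add_eq_zero, add_comm, ← h04, ← hq.triangle 0 4 5, zero 0 5]
  have neg_eq : -q 0 3 = q 0 3 := by
    rw [neg_eq_iff_add_eq_zero, ← neg_eq_zero, neg_add, ← zero 4 10, hq.triangle 4 5 10, h45, h5_10]
  have edges : ∀ a b : Fin 11, a < b → {a, b} ∈ coreEdges →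
      (a, b) ∈ [(0, 3), (3, 7), (6, 7), (6, 10), (5, 10), (4, 5), (0, 4)] := by
    decide +kernel
  refine ⟨by rwa [two_nsmul, ← neg_eq_iff_add_eq_zero], fun a b hab h => ?_⟩
  have hmem := edges a b hab h
  rw [neg_eq] at h37 h67 h6_10 h5_10 h45
  fin_cases hmem <;> first | rfl | assumption

theorem crossingParity_single (s : Finset (Fin 11)) :
    crossingParity (Pi.single s 1) = if s ∈ coreEdges then 1 else 0 := by
  simp [crossingParity, LinearMap.sum_apply, Pi.single_apply]

theorem IsOneCocycle.exists_eq_sub_add_crossingParity (hq : IsOneCocycle rpTwoComplex q) :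
    ∃ (f : Fin 11 → A) (g : ZMod 2 →+ A), ∀ ⦃a b⦄, a < b → {a, b} ∈ rpTwoComplex →
      q a b = f b - f a + g (crossingParity (Pi.single {a, b} 1)) := by
  obtain ⟨f, hf⟩ := exists_eq_sub_on_spanningTree q
  have hqf := hq.sub_coboundary f
  have htree : ∀ e ∈ spanningTree, q e.1 e.2 - (f e.2 - f e.1) = 0 :=
    fun e he => sub_eq_zero.2 (hf e he)
  obtain ⟨htwo, hcore⟩ := hqf.eq_on_coreEdges htree
  obtain ⟨g, hg⟩ : ∃ g : ZMod 2 →+ A, g 1 = q 0 3 - (f 3 - f 0) :=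
    ⟨ZMod.lift 2 ⟨zmultiplesHom A _, by simpa [← natCast_zsmul] using htwo⟩,
      (ZMod.lift_coe 2 _ 1).trans (one_zsmul _)⟩
  refine ⟨f, g, fun a b hab h => ?_⟩
  rw [← sub_eq_iff_eq_add', crossingParity_single]
  split_ifs with hmem
  · rw [hg, hcore hab hmem]
  · rw [map_zero, hqf.eq_zero_of_notMem_coreEdges htree hab h hmem]

theorem mem_boundaries_of_crossingParity_eq_zero {c : Finset (Fin 11) → ℤ}
    (hc : c ∈ cycles ℤ rpTwoComplex 1) (h : crossingParity c = 0) :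
    c ∈ boundaries ℤ rpTwoComplex 1 := by
  let π := (boundaries ℤ rpTwoComplex 1).mkQ
  have hπ : IsOneCocycle rpTwoComplex fun a b => π (Pi.single {a, b} 1) :=
    boundaries_one_le_ker_iff.1 (Submodule.ker_mkQ _).ge
  obtain ⟨f, g, hfg⟩ := hπ.exists_eq_sub_add_crossingParity
  have hvanish : (π - g.toIntLinearMap ∘ₗ crossingParity) c = 0 :=
    map_eq_zero_of_mem_cycles_one f (fun a b hab habΔ => sub_eq_iff_eq_add.2 (hfg hab habΔ)) hc
  have hπc : π c = 0 := by simpa [h] using hvanish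
  rwa [← Submodule.ker_mkQ (boundaries ℤ rpTwoComplex 1)]

theorem boundaries_le_ker_crossingParity :
    boundaries ℤ rpTwoComplex 1 ≤ LinearMap.ker crossingParity := by
  rw [boundaries_le_iff]
  simp only [Faces, Finset.mem_filter, and_imp, LinearMap.mem_ker, bd_single, map_sum, map_smul,
    crossingParity_single]
  simp only [rpTwoComplex, Finset.forall_mem_insert, Finset.mem_singleton, forall_eq]
  -- Each triangle has zero or two edges in `coreEdges`.
  and_intros <;> decide +kernel

theorem oneSidedLoop_mem_cycles : oneSidedLoop ∈ cycles ℤ rpTwoComplex 1 := by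
  have edge (a b : Fin 11) (hab : a < b := by decide)
      (h : {a, b} ∈ rpTwoComplex := by
        simp only [rpTwoComplex, Finset.mem_insert, true_or, or_true]) :
      Pi.single {a, b} 1 ∈ faceSpan ℤ rpTwoComplex 1 :=
    single_mem_faceSpan ℤ (mem_faces_one_iff.2 ⟨a, b, hab, h, rfl⟩)
  have bd_edge (a b : Fin 11) (h : a < b := by decide) :
      bd ℤ (Pi.single {a, b} 1) = Pi.single {b} 1 - Pi.single {a} 1 := by
    -- The general lemma takes its decidable equality from the linear order on `Fin 11`.
    convert bd_single_pair ℤ h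
  have mem : oneSidedLoop ∈ faceSpan ℤ rpTwoComplex 1 :=
    sub_mem (sub_mem (add_mem (edge 0 3) (edge 3 9)) (edge 8 9)) (edge 0 8)
  refine ⟨mem, LinearMap.mem_ker.2 ?_⟩
  rw [oneSidedLoop, map_sub, map_sub, map_add, bd_edge 0 3, bd_edge 3 9, bd_edge 8 9, bd_edge 0 8]
  abel

theorem crossingParity_oneSidedLoop : crossingParity oneSidedLoop = 1 := by
  simp only [oneSidedLoop, map_sub, map_add, crossingParity_single]
  decide

end ProjectivePlane

/-- The first integral simplicial homology group of the 11-vertex flag triangulation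
of `ℝP²` is `ℤ/2ℤ`. -/
theorem rpTwoComplex_homology_one : Nonempty (Homology ℤ rpTwoComplex 1 ≃+ ZMod 2) := by
  refine ⟨(homologyEquivOfLinearMap crossingParity (fun m => ?_) fun c hc =>
    ⟨mem_boundaries_of_crossingParity_eq_zero hc,
      fun h => boundaries_le_ker_crossingParity h⟩).toAddEquiv⟩
  refine ⟨m.val • oneSidedLoop, nsmul_mem oneSidedLoop_mem_cycles _, ?_⟩
  rw [map_nsmul, crossingParity_oneSidedLoop, nsmul_one, ZMod.natCast_zmod_val]

end SC
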